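/- For every n ≥ 8 and every x ∈ [0,1], the third-order modified Durrmeyer operator satisfies D̃_n^{M,3}(t − x; x) = D̃_n^{M,3}((t − x)^2; x) = D̃_n^{M,3}((t − x)^3; x) = 0; moreover, if f is ten times continuously differentiable on [0,1] and x ∈ [0,1], then D̃_n^{M,3}(f; x) − f(x) = O(1/n^3) as n → ∞, i.e. there exist C > 0 and N such that |D̃_n^{M,3}(f; x) − f(x)| ≤ C/n^3 for all n ≥ N. -/

import Mathlib

open Filter Topology

/-- Bernstein basis polynomial `p_{n,k}(x)`, zero when `k < 0` or `k > n`. -/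
noncomputable def bern (n : ℕ) (k : ℤ) (x : ℝ) : ℝ :=
  if 0 ≤ k ∧ k ≤ (n : ℤ) then (n.choose k.toNat : ℝ) * x ^ k.toNat * (1 - x) ^ (n - k.toNat)
  else 0

/-- The polynomial `b̃(x,n)` of the third-order construction. -/
noncomputable def bT (n : ℕ) (x : ℝ) : ℝ :=
  1 / 2 * (n : ℝ) ^ 2 * x ^ 4 + (-(n : ℝ) ^ 2 - 3 * (n : ℝ) - 16) * x ^ 3
    + (1 / 2 * (n : ℝ) ^ 2 + 29 / 6 * (n : ℝ) + 89 / 3) * x ^ 2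
    + (-(53 / 3) - 11 / 6 * (n : ℝ)) * x + 10 / 3

/-- The polynomial `d̃(x,n)` of the third-order construction. -/
noncomputable def dT (n : ℕ) (x : ℝ) : ℝ :=
  -(2 * (n : ℝ) ^ 2) * x ^ 4 + (4 * (n : ℝ) ^ 2 + 6 * (n : ℝ) + 32) * x ^ 3
    + (-(2 * (n : ℝ) ^ 2) - 28 / 3 * (n : ℝ) - 161 / 3) * x ^ 2
    + (80 / 3 + 10 / 3 * (n : ℝ)) * x - 10 / 3

/-- The polynomial `ẽ(x,n)` of the third-order construction. -/
noncomputable def eT (n : ℕ) (x : ℝ) : ℝ :=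
  3 * (n : ℝ) ^ 2 * (x * (1 - x)) ^ 2

/-- Third-order modified Bernstein basis `p_{n,k}^{M,3}(x)`. -/
noncomputable def pM3 (n : ℕ) (k : ℤ) (x : ℝ) : ℝ :=
  bT n x * bern (n - 4) k x + dT n x * bern (n - 4) (k - 1) x
    + eT n x * bern (n - 4) (k - 2) x + dT n (1 - x) * bern (n - 4) (k - 3) x
    + bT n (1 - x) * bern (n - 4) (k - 4) x

/-- Third-order modified Durrmeyer operator `D̃_n^{M,3}(f;x)`. -/
noncomputable def DM3 (n : ℕ) (f : ℝ → ℝ) (x : ℝ) : ℝ :=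
  ((n : ℝ) + 1) * ∑ k ∈ Finset.range (n + 1),
    pM3 n k x * ∫ t in (0:ℝ)..1, bern n k t * f t


/-- Falling factorial `y (y-1) ⋯ (y-l+1)`. -/
noncomputable def ffac (y : ℝ) : ℕ → ℝ
  | 0 => 1
  | l + 1 => ffac y l * (y - l)

/-- Rising factorial `y (y+1) ⋯ (y+l-1)`. -/
noncomputable def rfac (y : ℝ) : ℕ → ℝ
  | 0 => 1
  | l + 1 => rfac y l * (y + l)

/-- Numerator of the `r`-th central moment of the shifted Durrmeyer operator. -/
noncomputable def Qnum (r i : ℕ) (n x : ℝ) : ℝ :=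
  ∑ j ∈ Finset.range (r + 1), (r.choose j : ℝ) * (-x) ^ (r - j) * rfac (n + 2 + j) (r - j) *
    ∑ l ∈ Finset.range (j + 1), (j.choose l : ℝ) * ((i + j).descFactorial (j - l) : ℝ) *
      (ffac (n - 4) l * x ^ l)

/-- The combination of the five numerators (real parameter `n`). -/
noncomputable def Snum (r : ℕ) (n x : ℝ) : ℝ :=
  (1 / 2 * n ^ 2 * x ^ 4 + (-n ^ 2 - 3 * n - 16) * x ^ 3
    + (1 / 2 * n ^ 2 + 29 / 6 * n + 89 / 3) * x ^ 2
    + (-(53 / 3) - 11 / 6 * n) * x + 10 / 3) * Qnum r 0 n x +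
  (-(2 * n ^ 2) * x ^ 4 + (4 * n ^ 2 + 6 * n + 32) * x ^ 3
    + (-(2 * n ^ 2) - 28 / 3 * n - 161 / 3) * x ^ 2
    + (80 / 3 + 10 / 3 * n) * x - 10 / 3) * Qnum r 1 n x +
  (3 * n ^ 2 * (x * (1 - x)) ^ 2) * Qnum r 2 n x +
  (-(2 * n ^ 2) * (1 - x) ^ 4 + (4 * n ^ 2 + 6 * n + 32) * (1 - x) ^ 3
    + (-(2 * n ^ 2) - 28 / 3 * n - 161 / 3) * (1 - x) ^ 2
    + (80 / 3 + 10 / 3 * n) * (1 - x) - 10 / 3) * Qnum r 3 n x +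
  (1 / 2 * n ^ 2 * (1 - x) ^ 4 + (-n ^ 2 - 3 * n - 16) * (1 - x) ^ 3
    + (1 / 2 * n ^ 2 + 29 / 6 * n + 89 / 3) * (1 - x) ^ 2
    + (-(53 / 3) - 11 / 6 * n) * (1 - x) + 10 / 3) * Qnum r 4 n x

theorem Snum_zero (n x : ℝ) : Snum 0 n x = 1 := by
  simp [Snum, Qnum, Finset.sum_range_succ, Nat.choose, ffac, rfac]
  ring

theorem Snum_one (n x : ℝ) : Snum 1 n x = 0 := by
  simp [Snum, Qnum, Finset.sum_range_succ, Nat.choose, Nat.descFactorial, ffac, rfac]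
  ring

theorem Snum_two (n x : ℝ) : Snum 2 n x = 0 := by
  simp [Snum, Qnum, Finset.sum_range_succ, Nat.choose, Nat.descFactorial, ffac, rfac]
  ring

theorem Snum_three (n x : ℝ) : Snum 3 n x = 0 := by
  simp [Snum, Qnum, Finset.sum_range_succ, Nat.choose, Nat.descFactorial, ffac, rfac]
  ring

set_option maxHeartbeats 4000000 in
theorem Snum_four (x : ℝ) : ∃ a : ℕ → ℝ, ∀ n : ℝ,
    Snum 4 n x = ∑ s ∈ Finset.range (1 + 1), a s * n ^ s := by
  refine ⟨fun s => ([(-40) + (440)*x + (-1592)*x^2 + (2304)*x^3 + (-1152)*x^4,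
    (100)*x + (-520)*x^2 + (840)*x^3 + (-420)*x^4] : List ℝ).getD s 0, fun n => ?_⟩
  simp [Snum, Qnum, Finset.sum_range_succ, Nat.choose, Nat.descFactorial, ffac, rfac]
  ring

set_option maxHeartbeats 4000000 in
theorem Snum_five (x : ℝ) : ∃ a : ℕ → ℝ, ∀ n : ℝ,
    Snum 5 n x = ∑ s ∈ Finset.range (2 + 1), a s * n ^ s := by
  refine ⟨fun s => ([(-880) + (11320)*x + (-53640)*x^2 + (118960)*x^3 + (-124800)*x^4 +
        (49920)*x^5,
    (2020)*x + (-14460)*x^2 + (37640)*x^3 + (-42000)*x^4 + (16800)*x^5,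
    (180)*x^2 + (-720)*x^3 + (900)*x^4 + (-360)*x^5] : List ℝ).getD s 0, fun n => ?_⟩
  simp [Snum, Qnum, Finset.sum_range_succ, Nat.choose, Nat.descFactorial, ffac, rfac]
  ring

set_option maxHeartbeats 4000000 in
theorem Snum_six (x : ℝ) : ∃ a : ℕ → ℝ, ∀ n : ℝ,
    Snum 6 n x = ∑ s ∈ Finset.range (3 + 1), a s * n ^ s := by
  refine ⟨fun s => ([(-14400) + (211920)*x + (-1226880)*x^2 + (3619680)*x^3 + (-5784240)*x^4 +
        (4769280)*x^5 + (-1589760)*x^6,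
    (30120)*x + (-269160)*x^2 + (950640)*x^3 + (-1656720)*x^4 + (1417680)*x^5 + (-472560)*x^6,
    (7320)*x^2 + (-44520)*x^3 + (96960)*x^4 + (-89640)*x^5 + (29880)*x^6,
    (120)*x^3 + (-360)*x^4 + (360)*x^5 + (-120)*x^6] : List ℝ).getD s 0, fun n => ?_⟩
  simp [Snum, Qnum, Finset.sum_range_succ, Nat.choose, Nat.descFactorial, ffac, rfac]
  ring

set_option maxHeartbeats 4000000 in
theorem Snum_seven (x : ℝ) : ∃ a : ℕ → ℝ, ∀ n : ℝ,
    Snum 7 n x = ∑ s ∈ Finset.range (4 + 1), a s * n ^ s := by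
  refine ⟨fun s => ([(-218400) + (3617040)*x + (-24603600)*x^2 + (89916960)*x^3 +
        (-191839200)*x^4 + (239870400)*x^5 + (-163134720)*x^6 + (46609920)*x^7,
    (412440)*x + (-4368840)*x^2 + (19217520)*x^3 + (-44990400)*x^4 + (59062080)*x^5 +
        (-41065920)*x^6 + (11733120)*x^7,
    (183960)*x^2 + (-1481760)*x^3 + (4649400)*x^4 + (-7081200)*x^5 + (5221440)*x^6 +
        (-1491840)*x^7,
    (10080)*x^3 + (-50400)*x^4 + (90720)*x^5 + (-70560)*x^6 + (20160)*x^7] : List ℝ).getD s 0,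
        fun n => ?_⟩
  simp [Snum, Qnum, Finset.sum_range_succ, Nat.choose, Nat.descFactorial, ffac, rfac]
  ring

set_option maxHeartbeats 4000000 in
theorem Snum_eight (x : ℝ) : ∃ a : ℕ → ℝ, ∀ n : ℝ,
    Snum 8 n x = ∑ s ∈ Finset.range (5 + 1), a s * n ^ s := by
  refine ⟨fun s => ([(-3292800) + (60587520)*x + (-472053120)*x^2 + (2048484480)*x^3 +
        (-5441587200)*x^4 + (9090506880)*x^5 + (-9346323840)*x^6 + (5413847040)*x^7 +
        (-1353461760)*x^8,
    (5550720)*x + (-67394880)*x^2 + (350904960)*x^3 + (-1018224480)*x^4 + (1780571520)*x^5 +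
        (-1875599040)*x^6 + (1098921600)*x^7 + (-274730400)*x^8,
    (3877440)*x^2 + (-38522400)*x^3 + (157128720)*x^4 + (-336097440)*x^5 + (396459840)*x^6 +
        (-243794880)*x^7 + (60948720)*x^8,
    (426720)*x^3 + (-2993760)*x^4 + (8134560)*x^5 + (-10708320)*x^6 + (6854400)*x^7 +
        (-1713600)*x^8,
    (5040)*x^4 + (-20160)*x^5 + (30240)*x^6 + (-20160)*x^7 + (5040)*x^8] : List ℝ).getD s 0, fun
        n => ?_⟩
  simp [Snum, Qnum, Finset.sum_range_succ, Nat.choose, Nat.descFactorial, ffac, rfac]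
  ring

set_option maxHeartbeats 4000000 in
theorem Snum_nine (x : ℝ) : ∃ a : ℕ → ℝ, ∀ n : ℝ,
    Snum 9 n x = ∑ s ∈ Finset.range (6 + 1), a s * n ^ s := by
  refine ⟨fun s => ([(-50803200) + (1027918080)*x + (-9009100800)*x^2 + (45141425280)*x^3 +
        (-143063141760)*x^4 + (298203292800)*x^5 + (-409579632000)*x^6 + (357882174720)*x^7 +
        (-180644567040)*x^8 + (40143237120)*x^9,
    (75358080)*x + (-1022837760)*x^2 + (6084408960)*x^3 + (-20785282560)*x^4 + (44722903680)*x^5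
        + (-62182270080)*x^6 + (54585619200)*x^7 + (-27614442240)*x^8 + (6136542720)*x^9,
    (76204800)*x^2 + (-895376160)*x^3 + (4473070560)*x^4 + (-12302992800)*x^5 +
        (20083563360)*x^6 + (-19409302080)*x^7 + (10253355840)*x^8 + (-2278523520)*x^9,
    (13517280)*x^3 + (-121262400)*x^4 + (443711520)*x^5 + (-846084960)*x^6 + (885850560)*x^7 +
        (-483084000)*x^8 + (107352000)*x^9,
    (453600)*x^4 + (-2721600)*x^5 + (6350400)*x^6 + (-7257600)*x^7 + (4082400)*x^8 +
        (-907200)*x^9] : List ℝ).getD s 0, fun n => ?_⟩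
  simp [Snum, Qnum, Finset.sum_range_succ, Nat.choose, Nat.descFactorial, ffac, rfac]
  ring

set_option maxHeartbeats 4000000 in
theorem Qnum_ten_zero (x : ℝ) : ∃ a : ℕ → ℝ, ∀ n : ℝ,
    Qnum 10 0 n x = ∑ s ∈ Finset.range (5 + 1), a s * n ^ s := by
  refine ⟨fun s => ([(3628800) + (-185068800)*x + (3269548800)*x^2 + (-30064608000)*x^3 +
        (167577984000)*x^4 + (-606931315200)*x^5 + (1468604390400)*x^6 + (-2367948038400)*x^7 +
        (2452488192000)*x^8 + (-1481711616000)*x^9 + (398529331200)*x^10,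
    (32659200)*x + (-925344000)*x^2 + (10727337600)*x^3 + (-68610628800)*x^4 +
        (270729466560)*x^5 + (-689342270400)*x^6 + (1138337625600)*x^7 + (-1178471246400)*x^8 +
        (694002859200)*x^9 + (-176480458560)*x^10,
    (50803200)*x^2 + (-990662400)*x^3 + (8131687200)*x^4 + (-36901720800)*x^5 +
        (101508876000)*x^6 + (-173332353600)*x^7 + (179043631200)*x^8 + (-101879013600)*x^9 +
        (24368752800)*x^10,
    (21168000)*x^3 + (-294840000)*x^4 + (1702663200)*x^5 + (-5271588000)*x^6 + (9415224000)*x^7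
        + (-9664704000)*x^8 + (5277636000)*x^9 + (-1185559200)*x^10,
    (2268000)*x^4 + (-21319200)*x^5 + (79380000)*x^6 + (-149688000)*x^7 + (151956000)*x^8 +
        (-79380000)*x^9 + (16783200)*x^10,
    (30240)*x^5 + (-151200)*x^6 + (302400)*x^7 + (-302400)*x^8 + (151200)*x^9 + (-30240)*x^10] :
        List ℝ).getD s 0, fun n => ?_⟩
  simp [Qnum, Finset.sum_range_succ, Nat.choose, Nat.descFactorial, ffac, rfac]
  ring

set_option maxHeartbeats 4000000 in
theorem Qnum_ten_one (x : ℝ) : ∃ a : ℕ → ℝ, ∀ n : ℝ,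
    Qnum 10 1 n x = ∑ s ∈ Finset.range (5 + 1), a s * n ^ s := by
  refine ⟨fun s => ([(39916800) + (-1197504000)*x + (14968800000)*x^2 + (-105380352000)*x^3 +
        (469421568000)*x^4 + (-1394852659200)*x^5 + (2816529408000)*x^6 + (-3832012800000)*x^7 +
        (3372171264000)*x^8 + (-1737179136000)*x^9 + (398529331200)*x^10,
    (163296000)*x + (-3494534400)*x^2 + (32221324800)*x^3 + (-169079400000)*x^4 +
        (558653880960)*x^5 + (-1208200190400)*x^6 + (1712511763200)*x^7 + (-1534498257600)*x^8 +
        (788202576000)*x^9 + (-176480458560)*x^10,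
    (152409600)*x^2 + (-2463955200)*x^3 + (17104802400)*x^4 + (-66624768000)*x^5 +
        (159192280800)*x^6 + (-238648032000)*x^7 + (218779898400)*x^8 + (-111861388800)*x^9 +
        (24368752800)*x^10,
    (42336000)*x^3 + (-514382400)*x^4 + (2621656800)*x^5 + (-7248074400)*x^6 + (11708625600)*x^7
        + (-11027318400)*x^8 + (5602716000)*x^9 + (-1185559200)*x^10,
    (3175200)*x^4 + (-27216000)*x^5 + (93895200)*x^6 + (-166924800)*x^7 + (161935200)*x^8 +
        (-81648000)*x^9 + (16783200)*x^10,
    (30240)*x^5 + (-151200)*x^6 + (302400)*x^7 + (-302400)*x^8 + (151200)*x^9 + (-30240)*x^10] :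
        List ℝ).getD s 0, fun n => ?_⟩
  simp [Qnum, Finset.sum_range_succ, Nat.choose, Nat.descFactorial, ffac, rfac]
  ring

set_option maxHeartbeats 4000000 in
theorem Qnum_ten_two (x : ℝ) : ∃ a : ℕ → ℝ, ∀ n : ℝ,
    Qnum 10 2 n x = ∑ s ∈ Finset.range (5 + 1), a s * n ^ s := by
  refine ⟨fun s => ([(239500800) + (-5388768000)*x + (53288928000)*x^2 + (-306561024000)*x^3 +
        (1140023808000)*x^4 + (-2870177587200)*x^5 + (4962456576000)*x^6 + (-5824659456000)*x^7
        + (4445134848000)*x^8 + (-1992646656000)*x^9 + (398529331200)*x^10,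
    (598752000)*x + (-10559808000)*x^2 + (81898387200)*x^3 + (-366858374400)*x^4 +
        (1046283255360)*x^5 + (-1970189524800)*x^6 + (2448678556800)*x^7 + (-1935773078400)*x^8
        + (882402292800)*x^9 + (-176480458560)*x^10,
    (381024000)*x^2 + (-5334336000)*x^3 + (32382806400)*x^4 + (-111225290400)*x^5 +
        (236125562400)*x^6 + (-316827201600)*x^7 + (261972446400)*x^8 + (-121843764000)*x^9 +
        (24368752800)*x^10,
    (76204800)*x^3 + (-829785600)*x^4 + (3818858400)*x^5 + (-9611028000)*x^6 + (14260276800)*x^7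
        + (-12456763200)*x^8 + (5927796000)*x^9 + (-1185559200)*x^10,
    (4233600)*x^4 + (-33717600)*x^5 + (109317600)*x^6 + (-184766400)*x^7 + (172065600)*x^8 +
        (-83916000)*x^9 + (16783200)*x^10,
    (30240)*x^5 + (-151200)*x^6 + (302400)*x^7 + (-302400)*x^8 + (151200)*x^9 + (-30240)*x^10] :
        List ℝ).getD s 0, fun n => ?_⟩
  simp [Qnum, Finset.sum_range_succ, Nat.choose, Nat.descFactorial, ffac, rfac]
  ring

set_option maxHeartbeats 4000000 in
theorem Qnum_ten_three (x : ℝ) : ∃ a : ℕ → ℝ, ∀ n : ℝ,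
    Qnum 10 3 n x = ∑ s ∈ Finset.range (5 + 1), a s * n ^ s := by
  refine ⟨fun s => ([(1037836800) + (-19160064000)*x + (158669280000)*x^2 + (-775982592000)*x^3
        + (2481228288000)*x^4 + (-5418466099200)*x^5 + (8181347328000)*x^6 +
        (-8430428160000)*x^7 + (5671378944000)*x^8 + (-2248114176000)*x^9 + (398529331200)*x^10,
    (1796256000)*x + (-27303091200)*x^2 + (184190630400)*x^3 + (-723150892800)*x^4 +
        (1819253640960)*x^5 + (-3038448974400)*x^6 + (3365836588800)*x^7 + (-2382295708800)*x^8
        + (976602009600)*x^9 + (-176480458560)*x^10,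
    (838252800)*x^2 + (-10440057600)*x^3 + (56680041600)*x^4 + (-174985272000)*x^5 +
        (335574640800)*x^6 + (-408831494400)*x^7 + (308621275200)*x^8 + (-131826139200)*x^9 +
        (24368752800)*x^10,
    (127008000)*x^3 + (-1262822400)*x^4 + (5334184800)*x^5 + (-12391898400)*x^6 +
        (17079249600)*x^7 + (-13953038400)*x^8 + (6252876000)*x^9 + (-1185559200)*x^10,
    (5443200)*x^4 + (-40824000)*x^5 + (125647200)*x^6 + (-203212800)*x^7 + (182347200)*x^8 +
        (-86184000)*x^9 + (16783200)*x^10,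
    (30240)*x^5 + (-151200)*x^6 + (302400)*x^7 + (-302400)*x^8 + (151200)*x^9 + (-30240)*x^10] :
        List ℝ).getD s 0, fun n => ?_⟩
  simp [Qnum, Finset.sum_range_succ, Nat.choose, Nat.descFactorial, ffac, rfac]
  ring

set_option maxHeartbeats 4000000 in
theorem Qnum_ten_four (x : ℝ) : ∃ a : ℕ → ℝ, ∀ n : ℝ,
    Qnum 10 4 n x = ∑ s ∈ Finset.range (5 + 1), a s * n ^ s := by
  refine ⟨fun s => ([(3632428800) + (-57599942400)*x + (413258630400)*x^2 + (-1763923392000)*x^3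
        + (4953475296000)*x^4 + (-9550852819200)*x^5 + (12790021305600)*x^6 +
        (-11733859065600)*x^7 + (7050903552000)*x^8 + (-2503581696000)*x^9 +
        (398529331200)*x^10,
    (4670265600)*x + (-62868960000)*x^2 + (377253676800)*x^3 + (-1322803742400)*x^4 +
        (2983339114560)*x^5 + (-4482829915200)*x^6 + (4482984441600)*x^7 + (-2874066148800)*x^8
        + (1070801726400)*x^9 + (-176480458560)*x^10,
    (1676505600)*x^2 + (-18920563200)*x^3 + (93360405600)*x^4 + (-262785448800)*x^5 +
        (461005020000)*x^6 + (-515622542400)*x^7 + (358726384800)*x^8 + (-141808514400)*x^9 +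
        (24368752800)*x^10,
    (199584000)*x^3 + (-1837080000)*x^4 + (7209367200)*x^5 + (-15622740000)*x^6 +
        (20174616000)*x^7 + (-15516144000)*x^8 + (6577956000)*x^9 + (-1185559200)*x^10,
    (6804000)*x^4 + (-48535200)*x^5 + (142884000)*x^6 + (-222264000)*x^7 + (192780000)*x^8 +
        (-88452000)*x^9 + (16783200)*x^10,
    (30240)*x^5 + (-151200)*x^6 + (302400)*x^7 + (-302400)*x^8 + (151200)*x^9 + (-30240)*x^10] :
        List ℝ).getD s 0, fun n => ?_⟩
  simp [Qnum, Finset.sum_range_succ, Nat.choose, Nat.descFactorial, ffac, rfac]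
  ring

/-- Bernstein basis with natural index. -/
noncomputable def BB (n k : ℕ) (x : ℝ) : ℝ := (n.choose k : ℝ) * x ^ k * (1 - x) ^ (n - k)

theorem bern_nat (n k : ℕ) (x : ℝ) : bern n (k : ℤ) x = BB n k x := by
  unfold bern BB
  split_ifs with h
  · simp
  · have : n < k := by
      by_contra h'
      apply h
      constructor
      · positivity
      · exact_mod_cast not_lt.mp h'
    simp [Nat.choose_eq_zero_of_lt this]

theorem bern_neg (n : ℕ) (k : ℤ) (hk : k < 0) (x : ℝ) : bern n k x = 0 := by
  unfold bern
  rw [if_neg]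
  omega

theorem sum_shift (m i : ℕ) (hi : i ≤ 4) (x : ℝ) (h : ℕ → ℝ) :
    ∑ k ∈ Finset.range (m + 4 + 1), bern m ((k : ℤ) - i) x * h k =
      ∑ k ∈ Finset.range (m + 1), BB m k x * h (k + i) := by
  have e : m + 4 + 1 = i + (m + 5 - i) := by omega
  rw [e, Finset.sum_range_add]
  rw [Finset.sum_eq_zero, zero_add]
  · symm
    have : ∀ k, bern m (((i + k : ℕ) : ℤ) - i) x * h (i + k) = BB m k x * h (k + i) := by
      intro k
      rw [add_comm i k, ← bern_nat]
      congr 2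
      push_cast; ring
    simp_rw [this]
    apply Finset.sum_subset
    · intro k hk
      simp only [Finset.mem_range] at *
      omega
    · intro k _ hk
      simp only [Finset.mem_range] at hk
      have : m < k := by omega
      simp [BB, Nat.choose_eq_zero_of_lt this]
  · intro k hk
    simp only [Finset.mem_range] at hk
    rw [bern_neg _ _ (by omega), zero_mul]

/-- The shifted (positive) Durrmeyer operators. -/
noncomputable def Dsh (m i : ℕ) (g : ℝ → ℝ) (x : ℝ) : ℝ :=
  ∑ k ∈ Finset.range (m + 1), BB m k x *
    (((m : ℝ) + 4 + 1) * ∫ t in (0:ℝ)..1, BB (m + 4) (k + i) t * g t)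

theorem DM3_eq (m : ℕ) (f : ℝ → ℝ) (x : ℝ) :
    DM3 (m + 4) f x = bT (m + 4) x * Dsh m 0 f x + dT (m + 4) x * Dsh m 1 f x
      + eT (m + 4) x * Dsh m 2 f x + dT (m + 4) (1 - x) * Dsh m 3 f x
      + bT (m + 4) (1 - x) * Dsh m 4 f x := by
  have key : ∀ i : ℕ, i ≤ 4 → Dsh m i f x =
      ∑ k ∈ Finset.range (m + 4 + 1), bern m ((k : ℤ) - i) x *
        (((m : ℝ) + 4 + 1) * ∫ t in (0:ℝ)..1, BB (m + 4) k t * f t) := by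
    intro i hi
    rw [sum_shift m i hi x]
    rfl
  rw [key 0 (by norm_num), key 1 (by norm_num), key 2 (by norm_num), key 3 (by norm_num),
    key 4 (by norm_num)]
  unfold DM3 pM3
  simp only [Finset.mul_sum, ← Finset.sum_add_distrib]
  apply Finset.sum_congr rfl
  intro k _
  simp only [bern_nat, Nat.add_sub_cancel]
  push_cast
  rw [sub_zero, bern_nat]
  ring

/-- Beta integral with natural exponents. -/
theorem beta_nat (b : ℕ) : ∀ a : ℕ, ∫ t in (0:ℝ)..1, t ^ a * (1 - t) ^ b =
    (a.factorial : ℝ) * b.factorial / (a + b + 1).factorial := by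
  induction b with
  | zero =>
    intro a
    simp [Nat.factorial_succ]
    have : (a.factorial : ℝ) ≠ 0 := by positivity
    field_simp
  | succ b ih =>
    intro a
    have h := intervalIntegral.integral_mul_deriv_eq_deriv_mul (a := 0) (b := 1)
      (u := fun t : ℝ => (1 - t) ^ (b + 1)) (v := fun t : ℝ => t ^ (a + 1))
      (u' := fun t : ℝ => -((b + 1 : ℝ) * (1 - t) ^ b)) (v' := fun t : ℝ => (a + 1 : ℝ) * t ^ a)
      (by
        intro t _
        have := ((hasDerivAt_id' t).const_sub 1).fun_pow (b + 1)
        convert this using 1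
        push_cast
        simp)
      (by
        intro t _
        have := hasDerivAt_pow (a + 1) t
        rw [Nat.add_sub_cancel] at this
        exact_mod_cast this)
      (Continuous.intervalIntegrable (by fun_prop) _ _)
      (Continuous.intervalIntegrable (by fun_prop) _ _)
    have h1 : ∫ t in (0:ℝ)..1, (1 - t) ^ (b + 1) * ((a + 1 : ℝ) * t ^ a) =
        (a + 1 : ℝ) * ∫ t in (0:ℝ)..1, t ^ a * (1 - t) ^ (b + 1) := by
      rw [← intervalIntegral.integral_const_mul]
      congr 1; ext t; ring
    have h2 : ∫ t in (0:ℝ)..1, -((b + 1 : ℝ) * (1 - t) ^ b) * t ^ (a + 1) =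
        -((b + 1 : ℝ) * ∫ t in (0:ℝ)..1, t ^ (a + 1) * (1 - t) ^ b) := by
      rw [← intervalIntegral.integral_const_mul, ← intervalIntegral.integral_neg]
      congr 1; ext t; ring
    rw [h1, h2, ih (a + 1)] at h
    have e : a + (b + 1) + 1 = a + 1 + b + 1 := by ring
    rw [e]
    simp at h
    have ha : (a + 1 : ℝ) ≠ 0 := by positivity
    apply mul_left_cancel₀ ha
    rw [h]
    simp only [Nat.factorial_succ]
    push_cast
    ring

theorem rfac_pos (y : ℝ) (hy : 0 < y) (l : ℕ) : 0 < rfac y l := by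
  induction l with
  | zero => simp [rfac]
  | succ l ih => simp only [rfac]; positivity

theorem rfac_add (y : ℝ) (j l : ℕ) : rfac y (j + l) = rfac y j * rfac (y + j) l := by
  induction l with
  | zero => simp [rfac]
  | succ l ih =>
    rw [← add_assoc]
    simp only [rfac, ih]
    push_cast; ring

theorem factorial_rfac (n j : ℕ) :
    ((n + j).factorial : ℝ) = n.factorial * rfac ((n : ℝ) + 1) j := by
  induction j with
  | zero => simp [rfac]
  | succ j ih =>
    rw [← add_assoc, Nat.factorial_succ, rfac]
    push_cast
    rw [ih]; ring

theorem integral_BB_pow (n k j : ℕ) (hk : k ≤ n) :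
    ((n : ℝ) + 1) * ∫ t in (0:ℝ)..1, BB n k t * t ^ j =
      ((k + j).descFactorial j : ℝ) / rfac ((n : ℝ) + 2) j := by
  have h1 : ∫ t in (0:ℝ)..1, BB n k t * t ^ j =
      (n.choose k : ℝ) * ∫ t in (0:ℝ)..1, t ^ (k + j) * (1 - t) ^ (n - k) := by
    rw [← intervalIntegral.integral_const_mul]
    congr 1; ext t; unfold BB; ring
  rw [h1, beta_nat]
  have e : k + j + (n - k) + 1 = (n + 1) + j := by omega
  rw [e, factorial_rfac (n + 1) j, Nat.cast_choose ℝ hk, Nat.factorial_succ]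
  have hd : ((k + j).factorial : ℝ) = k.factorial * ((k + j).descFactorial j : ℝ) := by
    have := Nat.factorial_mul_descFactorial (show j ≤ k + j by omega)
    rw [Nat.add_sub_cancel] at this
    exact_mod_cast this.symm
  rw [hd]
  push_cast
  have e2 : (n : ℝ) + 1 + 1 = n + 2 := by ring
  rw [e2]
  have h3 := rfac_pos ((n : ℝ) + 2) (by positivity) j
  have h4 : (n.factorial : ℝ) ≠ 0 := by positivity
  have h5 : (k.factorial : ℝ) ≠ 0 := by positivity
  have h6 : ((n - k).factorial : ℝ) ≠ 0 := by positivity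
  field_simp

theorem desc_vandermonde (k i j : ℕ) :
    ((k + i + j).descFactorial j : ℝ) =
      ∑ l ∈ Finset.range (j + 1), (j.choose l : ℝ) * ((i + j).descFactorial (j - l) : ℝ) *
        (k.descFactorial l : ℝ) := by
  have h := Nat.add_choose_eq k (i + j) j
  rw [Finset.Nat.sum_antidiagonal_eq_sum_range_succ_mk] at h
  have h' : (k + i + j).descFactorial j = j.factorial *
      ∑ l ∈ Finset.range (j + 1), k.choose l * (i + j).choose (j - l) := by
    rw [Nat.descFactorial_eq_factorial_mul_choose, add_assoc, h]
  rw [h', Nat.cast_mul, Nat.cast_sum, Finset.mul_sum]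
  apply Finset.sum_congr rfl
  intro l hl
  have hl : l ≤ j := by simpa [Nat.lt_succ_iff] using hl
  rw [Nat.descFactorial_eq_factorial_mul_choose, Nat.descFactorial_eq_factorial_mul_choose,
    ← Nat.choose_mul_factorial_mul_factorial hl]
  push_cast; ring

theorem ffac_succ' (y : ℝ) (l : ℕ) : ffac (y + 1) (l + 1) = (y + 1) * ffac y l := by
  induction l with
  | zero => simp [ffac]
  | succ l ih =>
    rw [ffac, ih, ffac]
    push_cast; ring

theorem BB_fact_moment (x : ℝ) (l : ℕ) : ∀ m : ℕ,
    ∑ k ∈ Finset.range (m + 1), BB m k x * (k.descFactorial l : ℝ) = ffac m l * x ^ l := by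
  induction l with
  | zero =>
    intro m
    have h := add_pow x (1 - x) m
    simp only [BB, Nat.descFactorial_zero, ffac, pow_zero, Nat.cast_one, mul_one]
    rw [show x + (1 - x) = 1 by ring, one_pow] at h
    refine Eq.trans ?_ h.symm
    apply Finset.sum_congr rfl
    intro k _; ring
  | succ l ih =>
    intro m
    cases m with
    | zero =>
      have : ffac 0 (l + 1) = 0 := by
        clear ih
        induction l with
        | zero => simp [ffac]
        | succ l ih => rw [ffac, ih, zero_mul]
      simp [this]
    | succ m =>
      rw [Finset.sum_range_succ']
      push_cast
      rw [ffac_succ', pow_succ]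
      have h := ih m
      have : ∀ k, BB (m + 1) (k + 1) x * ((k + 1).descFactorial (l + 1) : ℝ) =
          (m + 1 : ℝ) * x * (BB m k x * (k.descFactorial l : ℝ)) := by
        intro k
        have hc : ((m + 1).choose (k + 1) : ℝ) * (k + 1) = (m + 1) * m.choose k := by
          exact_mod_cast (Nat.add_one_mul_choose_eq m k).symm
        unfold BB
        rw [Nat.succ_descFactorial_succ, Nat.add_sub_add_right]
        push_cast
        linear_combination x ^ (k + 1) * (1 - x) ^ (m - k) * (k.descFactorial l : ℝ) * hc
      simp_rw [this]
      rw [← Finset.mul_sum, h]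
      simp
      ring

theorem BB_cont (n k : ℕ) : Continuous (BB n k) := by
  unfold BB; fun_prop

theorem BB_nonneg (n k : ℕ) (x : ℝ) (hx : x ∈ Set.Icc (0:ℝ) 1) : 0 ≤ BB n k x := by
  unfold BB
  have h1 := hx.1
  have h2 : 0 ≤ 1 - x := by linarith [hx.2]
  positivity

theorem Dsh_pow (m i j : ℕ) (hi : i ≤ 4) (x : ℝ) :
    Dsh m i (fun t => t ^ j) x =
      (∑ l ∈ Finset.range (j + 1), (j.choose l : ℝ) * ((i + j).descFactorial (j - l) : ℝ) *
        (ffac m l * x ^ l)) / rfac ((m : ℝ) + 4 + 2) j := by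
  have h1 : Dsh m i (fun t => t ^ j) x = ∑ k ∈ Finset.range (m + 1), BB m k x *
      (((k + i + j).descFactorial j : ℝ) / rfac ((m : ℝ) + 4 + 2) j) := by
    unfold Dsh
    apply Finset.sum_congr rfl
    intro k hk
    have hk : k ≤ m := by simpa [Nat.lt_succ_iff] using hk
    have := integral_BB_pow (m + 4) (k + i) j (by omega)
    push_cast at this
    rw [this]
  rw [h1]
  simp_rw [← mul_div_assoc]
  rw [← Finset.sum_div]
  congr 1
  simp_rw [desc_vandermonde, Finset.mul_sum]
  rw [Finset.sum_comm]
  apply Finset.sum_congr rfl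
  intro l _
  rw [← BB_fact_moment, Finset.mul_sum]
  apply Finset.sum_congr rfl
  intro k _; ring

theorem Dsh_sum {ι : Type} (s : Finset ι) (m i : ℕ) (x : ℝ) (c : ι → ℝ) (g : ι → ℝ → ℝ)
    (hg : ∀ j ∈ s, IntervalIntegrable (g j) MeasureTheory.volume 0 1) :
    Dsh m i (fun t => ∑ j ∈ s, c j * g j t) x = ∑ j ∈ s, c j * Dsh m i (g j) x := by
  unfold Dsh
  simp_rw [Finset.mul_sum]
  rw [Finset.sum_comm]
  apply Finset.sum_congr rfl
  intro k _
  rw [intervalIntegral.integral_finsetSum]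
  · rw [Finset.mul_sum, Finset.mul_sum]
    apply Finset.sum_congr rfl
    intro j _
    have : ∀ t, BB (m + 4) (k + i) t * (c j * g j t) = c j * (BB (m + 4) (k + i) t * g j t) := by
      intro t; ring
    simp_rw [this]
    rw [intervalIntegral.integral_const_mul]
    ring
  · intro j hj
    exact ((hg j hj).const_mul (c j)).continuousOn_mul (BB_cont _ _).continuousOn

theorem Dsh_central (m i r : ℕ) (hi : i ≤ 4) (x : ℝ) :
    Dsh m i (fun t => (t - x) ^ r) x =
      Qnum r i ((m : ℝ) + 4) x / rfac ((m : ℝ) + 4 + 2) r := by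
  have h : (fun t : ℝ => (t - x) ^ r) = fun t => ∑ j ∈ Finset.range (r + 1),
      ((r.choose j : ℝ) * (-x) ^ (r - j)) * t ^ j := by
    ext t
    rw [sub_eq_add_neg, add_pow]
    apply Finset.sum_congr rfl
    intro j _; ring
  rw [h, Dsh_sum _ _ _ _ _ (fun j t => t ^ j)
    (fun j _ => Continuous.intervalIntegrable (by fun_prop) _ _)]
  unfold Qnum
  rw [Finset.sum_div]
  apply Finset.sum_congr rfl
  intro j hj
  have hj : j ≤ r := by simpa [Nat.lt_succ_iff] using hj
  rw [Dsh_pow m i j hi]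
  have e : rfac ((m : ℝ) + 4 + 2) r =
      rfac ((m : ℝ) + 4 + 2) j * rfac ((m : ℝ) + 4 + 2 + j) (r - j) := by
    rw [← rfac_add]; congr 1; omega
  rw [e, add_sub_cancel_right]
  have h1 := rfac_pos ((m : ℝ) + 4 + 2) (by positivity) j
  have h2 := rfac_pos ((m : ℝ) + 4 + 2 + j) (by positivity) (r - j)
  field_simp

theorem DM3_central (m r : ℕ) (x : ℝ) :
    DM3 (m + 4) (fun t => (t - x) ^ r) x =
      Snum r ((m : ℝ) + 4) x / rfac ((m : ℝ) + 4 + 2) r := by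
  rw [DM3_eq, Dsh_central m 0 r (by norm_num), Dsh_central m 1 r (by norm_num),
    Dsh_central m 2 r (by norm_num), Dsh_central m 3 r (by norm_num),
    Dsh_central m 4 r (by norm_num)]
  unfold Snum bT dT eT
  push_cast
  ring

theorem rfac_ge (n : ℝ) (hn : 0 ≤ n) (r : ℕ) : n ^ r ≤ rfac (n + 2) r := by
  induction r with
  | zero => simp [rfac]
  | succ r ih =>
    rw [pow_succ, rfac]
    have : (0:ℝ) ≤ r := by positivity
    apply mul_le_mul ih (by linarith) hn (le_trans (by positivity) ih)

/-- A polynomial in `n` of degree at most `d`, divided by a rising factorial. -/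
theorem poly_bound (d r : ℕ) (hdr : d ≤ r) (a : ℕ → ℝ) (n : ℝ) (hn : 1 ≤ n) (q : ℝ)
    (hq : q = ∑ s ∈ Finset.range (d + 1), a s * n ^ s) :
    |q / rfac (n + 2) r| ≤ (∑ s ∈ Finset.range (d + 1), |a s|) / n ^ (r - d) := by
  have hn0 : 0 < n := by linarith
  have h1 : |q| ≤ (∑ s ∈ Finset.range (d + 1), |a s|) * n ^ d := by
    rw [hq, Finset.sum_mul]
    refine (Finset.abs_sum_le_sum_abs _ _).trans (Finset.sum_le_sum ?_)
    intro s hs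
    have hs : s ≤ d := by simpa [Nat.lt_succ_iff] using hs
    rw [abs_mul, abs_of_pos (pow_pos hn0 s)]
    exact mul_le_mul_of_nonneg_left (pow_le_pow_right₀ hn hs) (abs_nonneg _)
  have h2 := rfac_ge n hn0.le r
  have h3 := rfac_pos (n + 2) (by linarith) r
  rw [abs_div, abs_of_pos h3, div_le_div_iff₀ h3 (pow_pos hn0 _)]
  have h4 : 0 ≤ ∑ s ∈ Finset.range (d + 1), |a s| := Finset.sum_nonneg (fun _ _ => abs_nonneg _)
  calc |q| * n ^ (r - d) ≤ (∑ s ∈ Finset.range (d + 1), |a s|) * n ^ d * n ^ (r - d) :=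
        mul_le_mul_of_nonneg_right h1 (by positivity)
    _ = (∑ s ∈ Finset.range (d + 1), |a s|) * n ^ r := by
        rw [mul_assoc, ← pow_add]; congr 2; omega
    _ ≤ _ := mul_le_mul_of_nonneg_left h2 h4

theorem taylor_bound (f : ℝ → ℝ) (hf : ContDiffOn ℝ 10 f (Set.Icc 0 1)) (x : ℝ)
    (hx : x ∈ Set.Icc (0:ℝ) 1) : ∃ (a : ℕ → ℝ) (K : ℝ), a 0 = f x ∧ ∀ t ∈ Set.Icc (0:ℝ) 1,
      |f t - ∑ j ∈ Finset.range 10, a j * (t - x) ^ j| ≤ K * (t - x) ^ 10 := by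
  have h := taylor_isLittleO (n := 10) (convex_Icc (0:ℝ) 1) hx (by exact_mod_cast hf)
  set a : ℕ → ℝ := fun k => (k.factorial : ℝ)⁻¹ * iteratedDerivWithin k f (Set.Icc 0 1) x with ha
  have hT : ∀ t, taylorWithinEval f 10 (Set.Icc 0 1) x t =
      ∑ j ∈ Finset.range 11, a j * (t - x) ^ j := by
    intro t
    rw [taylor_within_apply]
    apply Finset.sum_congr rfl
    intro j _
    simp only [smul_eq_mul, ha]
    ring
  have hO := h.def (show (0:ℝ) < 1 by norm_num)
  rw [eventually_nhdsWithin_iff, Metric.eventually_nhds_iff] at hO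
  obtain ⟨δ, hδ, hO⟩ := hO
  have hc : ContinuousOn (fun t => f t - ∑ j ∈ Finset.range 10, a j * (t - x) ^ j)
      (Set.Icc 0 1) := hf.continuousOn.sub (by fun_prop)
  obtain ⟨M, hM⟩ := isCompact_Icc.exists_bound_of_continuousOn hc
  have hM0 : 0 ≤ M := (norm_nonneg _).trans (hM x hx)
  refine ⟨a, max (1 + |a 10|) (M / δ ^ 10), by simp [ha], ?_⟩
  intro t ht
  have hp : 0 ≤ (t - x) ^ 10 := (by decide : Even 10).pow_nonneg _
  rcases lt_or_ge (dist t x) δ with hlt | hge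
  · have h1 := hO hlt ht
    rw [hT, Finset.sum_range_succ, Real.norm_eq_abs, Real.norm_eq_abs, abs_of_nonneg hp] at h1
    have h2 : |f t - ∑ j ∈ Finset.range 10, a j * (t - x) ^ j| ≤
        (t - x) ^ 10 + |a 10| * (t - x) ^ 10 := by
      have e : f t - ∑ j ∈ Finset.range 10, a j * (t - x) ^ j =
        (f t - (∑ j ∈ Finset.range 10, a j * (t - x) ^ j + a 10 * (t - x) ^ 10)) +
          a 10 * (t - x) ^ 10 := by ring
      rw [e]
      refine (abs_add_le _ _).trans (add_le_add (by linarith) ?_)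
      rw [abs_mul, abs_of_nonneg hp]
    calc _ ≤ _ := h2
      _ = (1 + |a 10|) * (t - x) ^ 10 := by ring
      _ ≤ _ := mul_le_mul_of_nonneg_right (le_max_left _ _) hp
  · have h1 := hM t ht
    rw [Real.norm_eq_abs] at h1
    have h2 : δ ^ 10 ≤ (t - x) ^ 10 := by
      rw [← (by decide : Even 10).pow_abs (t - x)]
      exact pow_le_pow_left₀ hδ.le hge 10
    calc _ ≤ M := h1
      _ = M / δ ^ 10 * δ ^ 10 := by field_simp
      _ ≤ M / δ ^ 10 * (t - x) ^ 10 := mul_le_mul_of_nonneg_left h2 (by positivity)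
      _ ≤ _ := mul_le_mul_of_nonneg_right (le_max_right _ _) hp

theorem Dsh_abs_le (m i : ℕ) (x : ℝ) (hx : x ∈ Set.Icc (0:ℝ) 1) (R g : ℝ → ℝ)
    (hR : ContinuousOn R (Set.Icc 0 1)) (hg : Continuous g) (K : ℝ)
    (h : ∀ t ∈ Set.Icc (0:ℝ) 1, |R t| ≤ K * g t) :
    |Dsh m i R x| ≤ K * Dsh m i g x := by
  unfold Dsh
  rw [Finset.mul_sum]
  refine (Finset.abs_sum_le_sum_abs _ _).trans (Finset.sum_le_sum ?_)
  intro k _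
  have hm : (0:ℝ) ≤ (m : ℝ) + 4 + 1 := by positivity
  rw [abs_mul, abs_mul, abs_of_nonneg (BB_nonneg m k x hx), abs_of_nonneg hm]
  have hB := BB_cont (m + 4) (k + i)
  have : |∫ t in (0:ℝ)..1, BB (m + 4) (k + i) t * R t| ≤
      K * ∫ t in (0:ℝ)..1, BB (m + 4) (k + i) t * g t := by
    rw [← intervalIntegral.integral_const_mul]
    refine (intervalIntegral.abs_integral_le_integral_abs (by norm_num)).trans ?_
    apply intervalIntegral.integral_mono_on (by norm_num)
    · apply ContinuousOn.intervalIntegrable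
      rw [Set.uIcc_of_le (by norm_num : (0:ℝ) ≤ 1)]
      exact (hB.continuousOn.mul hR).abs
    · exact Continuous.intervalIntegrable (by fun_prop) _ _
    · intro t ht
      have h0 := BB_nonneg (m + 4) (k + i) t ht
      rw [abs_mul, abs_of_nonneg h0]
      calc _ ≤ BB (m + 4) (k + i) t * (K * g t) := mul_le_mul_of_nonneg_left (h t ht) h0
        _ = _ := by ring
  calc _ ≤ BB m k x * (((m : ℝ) + 4 + 1) * (K * ∫ t in (0:ℝ)..1, BB (m + 4) (k + i) t * g t)) :=
        mul_le_mul_of_nonneg_left (mul_le_mul_of_nonneg_left this hm) (BB_nonneg m k x hx)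
    _ = _ := by ring

theorem Dsh_add (m i : ℕ) (x : ℝ) (g h : ℝ → ℝ) (hg : ContinuousOn g (Set.Icc 0 1))
    (hh : ContinuousOn h (Set.Icc 0 1)) :
    Dsh m i (fun t => g t + h t) x = Dsh m i g x + Dsh m i h x := by
  have e : (Set.uIcc (0:ℝ) 1) = Set.Icc 0 1 := Set.uIcc_of_le (by norm_num)
  have := Dsh_sum (Finset.univ : Finset Bool) m i x (fun _ => 1) (fun b => cond b g h) (by
    intro b _
    cases b
    · exact ContinuousOn.intervalIntegrable (by rw [e]; exact hh)
    · exact ContinuousOn.intervalIntegrable (by rw [e]; exact hg))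
  simpa using this

theorem bT_bound (x : ℝ) (hx : x ∈ Set.Icc (0:ℝ) 1) (n : ℕ) (hn : 1 ≤ n) :
    |bT n x| ≤ 100 * (n : ℝ) ^ 2 := by
  have hn : (1:ℝ) ≤ n := by exact_mod_cast hn
  have h0 := hx.1
  have h1 := hx.2
  have p2 : x ^ 2 ≤ 1 := pow_le_one₀ h0 h1
  have p3 : x ^ 3 ≤ 1 := pow_le_one₀ h0 h1
  have p4 : x ^ 4 ≤ 1 := pow_le_one₀ h0 h1
  have q2 : 0 ≤ x ^ 2 := by positivity
  have q3 : 0 ≤ x ^ 3 := by positivity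
  have q4 : 0 ≤ x ^ 4 := by positivity
  unfold bT
  set N : ℝ := (n : ℝ)
  have hN : N ≤ N ^ 2 := by nlinarith
  have hN1 : 1 ≤ N ^ 2 := by nlinarith
  have key : ∀ c y : ℝ, 0 ≤ y → y ≤ 1 → 0 ≤ c → 0 ≤ c * y ∧ c * y ≤ c := by
    intro c y a b d
    exact ⟨mul_nonneg d a, mul_le_of_le_one_right d b⟩
  have k1 := key (1 / 2 * N ^ 2) _ q4 p4 (by positivity)
  have k2 := key (N ^ 2 + 3 * N + 16) _ q3 p3 (by positivity)
  have k3 := key (1 / 2 * N ^ 2 + 29 / 6 * N + 89 / 3) _ q2 p2 (by positivity)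
  have k4 := key (53 / 3 + 11 / 6 * N) _ h0 h1 (by positivity)
  rw [abs_le]
  constructor <;> linarith

theorem dT_bound (x : ℝ) (hx : x ∈ Set.Icc (0:ℝ) 1) (n : ℕ) (hn : 1 ≤ n) :
    |dT n x| ≤ 100 * (n : ℝ) ^ 2 := by
  have hn : (1:ℝ) ≤ n := by exact_mod_cast hn
  have h0 := hx.1
  have h1 := hx.2
  have p2 : x ^ 2 ≤ 1 := pow_le_one₀ h0 h1
  have p3 : x ^ 3 ≤ 1 := pow_le_one₀ h0 h1
  have p4 : x ^ 4 ≤ 1 := pow_le_one₀ h0 h1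
  have q2 : 0 ≤ x ^ 2 := by positivity
  have q3 : 0 ≤ x ^ 3 := by positivity
  have q4 : 0 ≤ x ^ 4 := by positivity
  unfold dT
  set N : ℝ := (n : ℝ)
  have hN : N ≤ N ^ 2 := by nlinarith
  have hN1 : 1 ≤ N ^ 2 := by nlinarith
  have key : ∀ c y : ℝ, 0 ≤ y → y ≤ 1 → 0 ≤ c → 0 ≤ c * y ∧ c * y ≤ c := by
    intro c y a b d
    exact ⟨mul_nonneg d a, mul_le_of_le_one_right d b⟩
  have k1 := key (2 * N ^ 2) _ q4 p4 (by positivity)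
  have k2 := key (4 * N ^ 2 + 6 * N + 32) _ q3 p3 (by positivity)
  have k3 := key (2 * N ^ 2 + 28 / 3 * N + 161 / 3) _ q2 p2 (by positivity)
  have k4 := key (80 / 3 + 10 / 3 * N) _ h0 h1 (by positivity)
  rw [abs_le]
  constructor <;> linarith

theorem eT_bound (x : ℝ) (hx : x ∈ Set.Icc (0:ℝ) 1) (n : ℕ) :
    |eT n x| ≤ 100 * (n : ℝ) ^ 2 := by
  have h0 := hx.1
  have h1 : 0 ≤ 1 - x := by linarith [hx.2]
  have h2 : (x * (1 - x)) ^ 2 ≤ 1 := pow_le_one₀ (by positivity) (by nlinarith)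
  unfold eT
  rw [abs_of_nonneg (by positivity)]
  nlinarith [mul_le_mul_of_nonneg_left h2 (sq_nonneg (n : ℝ)), sq_nonneg (n : ℝ)]

theorem moment_bound (x : ℝ) (r : ℕ) (h4 : 4 ≤ r) (h9 : r ≤ 9) : ∃ C : ℝ, 0 ≤ C ∧
    ∀ m : ℕ, |DM3 (m + 4) (fun t => (t - x) ^ r) x| ≤ C / ((m : ℝ) + 4) ^ 3 := by
  have hS : ∃ a : ℕ → ℝ, ∀ n : ℝ,
      Snum r n x = ∑ s ∈ Finset.range (r - 3 + 1), a s * n ^ s := by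
    interval_cases r
    · exact Snum_four x
    · exact Snum_five x
    · exact Snum_six x
    · exact Snum_seven x
    · exact Snum_eight x
    · exact Snum_nine x
  obtain ⟨a, ha⟩ := hS
  refine ⟨∑ s ∈ Finset.range (r - 3 + 1), |a s|,
    Finset.sum_nonneg (fun _ _ => abs_nonneg _), ?_⟩
  intro m
  have hm : (1 : ℝ) ≤ (m : ℝ) + 4 := by
    have : (0:ℝ) ≤ m := by positivity
    linarith
  rw [DM3_central]
  have := poly_bound (r - 3) r (by omega) a ((m : ℝ) + 4) hm _ (ha _)
  rwa [show r - (r - 3) = 3 by omega] at this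

theorem tenth_bound (x : ℝ) (i : ℕ) (hi : i ≤ 4) : ∃ C : ℝ, 0 ≤ C ∧
    ∀ m : ℕ, |Dsh m i (fun t => (t - x) ^ 10) x| ≤ C / ((m : ℝ) + 4) ^ 5 := by
  have hS : ∃ a : ℕ → ℝ, ∀ n : ℝ,
      Qnum 10 i n x = ∑ s ∈ Finset.range (5 + 1), a s * n ^ s := by
    interval_cases i
    · exact Qnum_ten_zero x
    · exact Qnum_ten_one x
    · exact Qnum_ten_two x
    · exact Qnum_ten_three x
    · exact Qnum_ten_four x
  obtain ⟨a, ha⟩ := hS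
  refine ⟨∑ s ∈ Finset.range (5 + 1), |a s|,
    Finset.sum_nonneg (fun _ _ => abs_nonneg _), ?_⟩
  intro m
  have hm : (1 : ℝ) ≤ (m : ℝ) + 4 := by
    have : (0:ℝ) ≤ m := by positivity
    linarith
  rw [Dsh_central m i 10 hi]
  exact poly_bound 5 10 (by omega) a ((m : ℝ) + 4) hm _ (ha _)

theorem DM3_low (m r : ℕ) (h1 : 1 ≤ r) (h3 : r ≤ 3) (x : ℝ) :
    DM3 (m + 4) (fun t => (t - x) ^ r) x = 0 := by
  rw [DM3_central]
  interval_cases r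
  · rw [Snum_one, zero_div]
  · rw [Snum_two, zero_div]
  · rw [Snum_three, zero_div]

theorem DM3_zeroth (m : ℕ) (x : ℝ) : DM3 (m + 4) (fun t => (t - x) ^ 0) x = 1 := by
  rw [DM3_central, Snum_zero]
  simp [rfac]

theorem remainder_bound (x : ℝ) (hx : x ∈ Set.Icc (0:ℝ) 1) (R : ℝ → ℝ)
    (hR : ContinuousOn R (Set.Icc 0 1)) (K : ℝ)
    (h : ∀ t ∈ Set.Icc (0:ℝ) 1, |R t| ≤ K * (t - x) ^ 10) :
    ∃ C : ℝ, 0 ≤ C ∧ ∀ m : ℕ, |DM3 (m + 4) R x| ≤ C / ((m : ℝ) + 4) ^ 3 := by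
  have hD : ∀ i : ℕ, i ≤ 4 → ∃ C : ℝ, 0 ≤ C ∧ ∀ (m : ℕ) (c : ℝ),
      |c| ≤ 100 * ((m : ℝ) + 4) ^ 2 → |c * Dsh m i R x| ≤ C / ((m : ℝ) + 4) ^ 3 := by
    intro i hi
    obtain ⟨C, hC, hb⟩ := tenth_bound x i hi
    refine ⟨100 * (|K| * C), by positivity, ?_⟩
    intro m c hc
    have h1 := Dsh_abs_le m i x hx R (fun t => (t - x) ^ 10) hR (by fun_prop) K h
    have h2 : |Dsh m i R x| ≤ |K| * (C / ((m : ℝ) + 4) ^ 5) := by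
      refine h1.trans ((le_abs_self _).trans ?_)
      rw [abs_mul]
      exact mul_le_mul_of_nonneg_left (hb m) (abs_nonneg _)
    rw [abs_mul]
    have hm : (0:ℝ) < (m : ℝ) + 4 := by positivity
    calc _ ≤ (100 * ((m : ℝ) + 4) ^ 2) * (|K| * (C / ((m : ℝ) + 4) ^ 5)) :=
          mul_le_mul hc h2 (abs_nonneg _) (by positivity)
      _ = _ := by field_simp
  obtain ⟨C0, p0, H0⟩ := hD 0 (by norm_num)
  obtain ⟨C1, p1, H1⟩ := hD 1 (by norm_num)
  obtain ⟨C2, p2, H2⟩ := hD 2 (by norm_num)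
  obtain ⟨C3, p3, H3⟩ := hD 3 (by norm_num)
  obtain ⟨C4, p4, H4⟩ := hD 4 (by norm_num)
  refine ⟨C0 + C1 + C2 + C3 + C4, by positivity, ?_⟩
  intro m
  have hx' : 1 - x ∈ Set.Icc (0:ℝ) 1 := ⟨by linarith [hx.2], by linarith [hx.1]⟩
  have e : ((m + 4 : ℕ) : ℝ) = (m : ℝ) + 4 := by push_cast; ring
  have b0 := H0 m _ (by rw [← e]; exact bT_bound x hx (m + 4) (by omega))
  have b1 := H1 m _ (by rw [← e]; exact dT_bound x hx (m + 4) (by omega))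
  have b2 := H2 m _ (by rw [← e]; exact eT_bound x hx (m + 4))
  have b3 := H3 m _ (by rw [← e]; exact dT_bound (1 - x) hx' (m + 4) (by omega))
  have b4 := H4 m _ (by rw [← e]; exact bT_bound (1 - x) hx' (m + 4) (by omega))
  rw [DM3_eq]
  simp only [add_div]
  refine (abs_add_le _ _).trans (add_le_add ?_ b4)
  refine (abs_add_le _ _).trans (add_le_add ?_ b3)
  refine (abs_add_le _ _).trans (add_le_add ?_ b2)
  exact (abs_add_le _ _).trans (add_le_add b0 b1)

theorem DM3_decomp (m : ℕ) (x : ℝ) (a : ℕ → ℝ) (R : ℝ → ℝ)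
    (hR : ContinuousOn R (Set.Icc 0 1)) :
    DM3 (m + 4) (fun t => (∑ j ∈ Finset.range 10, a j * (t - x) ^ j) + R t) x =
      (∑ j ∈ Finset.range 10, a j * DM3 (m + 4) (fun t => (t - x) ^ j) x)
        + DM3 (m + 4) R x := by
  have hD : ∀ i : ℕ, Dsh m i (fun t => (∑ j ∈ Finset.range 10, a j * (t - x) ^ j) + R t) x =
      (∑ j ∈ Finset.range 10, a j * Dsh m i (fun t => (t - x) ^ j) x) + Dsh m i R x := by
    intro i
    rw [Dsh_add m i x _ R (by fun_prop) hR, Dsh_sum _ _ _ _ _ (fun j t => (t - x) ^ j)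
      (fun j _ => Continuous.intervalIntegrable (by fun_prop) _ _)]
  simp only [DM3_eq, hD, mul_add, Finset.sum_add_distrib, Finset.mul_sum]
  have c : ∀ i : ℕ, ∀ y : ℝ, ∑ j ∈ Finset.range 10, y * (a j * Dsh m i (fun t => (t - x) ^ j) x) =
      ∑ j ∈ Finset.range 10, a j * (y * Dsh m i (fun t => (t - x) ^ j) x) := by
    intro i y
    apply Finset.sum_congr rfl
    intro j _; ring
  simp only [c]
  ring

theorem DM3_congr (m : ℕ) (x : ℝ) (f g : ℝ → ℝ) (h : ∀ t ∈ Set.Icc (0:ℝ) 1, f t = g t) :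
    DM3 (m + 4) f x = DM3 (m + 4) g x := by
  unfold DM3
  congr 1
  apply Finset.sum_congr rfl
  intro k _
  congr 1
  apply intervalIntegral.integral_congr
  intro t ht
  rw [Set.uIcc_of_le (by norm_num : (0:ℝ) ≤ 1)] at ht
  simp only [h t ht]

theorem DM3_vanishing_moments_and_order :
    (∀ n : ℕ, 8 ≤ n → ∀ x ∈ Set.Icc (0:ℝ) 1,
      DM3 n (fun t => t - x) x = 0 ∧
      DM3 n (fun t => (t - x) ^ 2) x = 0 ∧
      DM3 n (fun t => (t - x) ^ 3) x = 0) ∧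
    (∀ f : ℝ → ℝ, ContDiffOn ℝ 10 f (Set.Icc 0 1) → ∀ x ∈ Set.Icc (0:ℝ) 1,
      ∃ C > (0:ℝ), ∃ N : ℕ, ∀ n : ℕ, N ≤ n →
        |DM3 n f x - f x| ≤ C / (n : ℝ) ^ 3) := by
  constructor
  · intro n hn x _
    obtain ⟨m, rfl⟩ : ∃ m, n = m + 4 := ⟨n - 4, by omega⟩
    refine ⟨?_, DM3_low m 2 (by norm_num) (by norm_num) x,
      DM3_low m 3 (by norm_num) (by norm_num) x⟩
    have := DM3_low m 1 (by norm_num) (by norm_num) x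
    simpa only [pow_one] using this
  · intro f hf x hx
    obtain ⟨a, K, ha0, hK⟩ := taylor_bound f hf x hx
    set R : ℝ → ℝ := fun t => f t - ∑ j ∈ Finset.range 10, a j * (t - x) ^ j with hRdef
    have hRc : ContinuousOn R (Set.Icc 0 1) := hf.continuousOn.sub (by fun_prop)
    obtain ⟨CR, hCR, HR⟩ := remainder_bound x hx R hRc K hK
    choose! C hC0 hC using fun r h => moment_bound x r (And.left h) (And.right h)
    refine ⟨∑ r ∈ Finset.Icc 4 9, |a r| * C r + CR + 1, ?_, 4, ?_⟩
    · have : 0 ≤ ∑ r ∈ Finset.Icc 4 9, |a r| * C r := by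
        apply Finset.sum_nonneg
        intro r hr
        exact mul_nonneg (abs_nonneg _) (hC0 r (Finset.mem_Icc.mp hr))
      linarith
    · intro n hn
      obtain ⟨m, rfl⟩ : ∃ m, n = m + 4 := ⟨n - 4, by omega⟩
      have e1 : DM3 (m + 4) f x = (∑ j ∈ Finset.range 10,
          a j * DM3 (m + 4) (fun t => (t - x) ^ j) x) + DM3 (m + 4) R x := by
        rw [← DM3_decomp m x a R hRc]
        apply DM3_congr
        intro t _
        simp only [hRdef]; ring
      have e2 : ∑ j ∈ Finset.range 10, a j * DM3 (m + 4) (fun t => (t - x) ^ j) x =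
          f x + ∑ j ∈ Finset.Icc 4 9, a j * DM3 (m + 4) (fun t => (t - x) ^ j) x := by
        have : Finset.range 10 = {0, 1, 2, 3} ∪ Finset.Icc 4 9 := by decide
        rw [this, Finset.sum_union (by decide)]
        congr 1
        rw [Finset.sum_insert (by decide), Finset.sum_insert (by decide),
          Finset.sum_insert (by decide), Finset.sum_singleton, DM3_zeroth,
          DM3_low m 1 (by norm_num) (by norm_num), DM3_low m 2 (by norm_num) (by norm_num),
          DM3_low m 3 (by norm_num) (by norm_num), ha0]
        ring
      rw [e1, e2]
      push_cast
      have hm : (0:ℝ) < (m : ℝ) + 4 := by positivity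
      have e3 : f x + ∑ j ∈ Finset.Icc 4 9, a j * DM3 (m + 4) (fun t => (t - x) ^ j) x
          + DM3 (m + 4) R x - f x =
          ∑ j ∈ Finset.Icc 4 9, a j * DM3 (m + 4) (fun t => (t - x) ^ j) x
          + DM3 (m + 4) R x := by ring
      rw [e3, add_div, add_div, Finset.sum_div]
      have h1 : |∑ j ∈ Finset.Icc 4 9, a j * DM3 (m + 4) (fun t => (t - x) ^ j) x| ≤
          ∑ r ∈ Finset.Icc 4 9, |a r| * C r / ((m : ℝ) + 4) ^ 3 := by
        refine (Finset.abs_sum_le_sum_abs _ _).trans (Finset.sum_le_sum ?_)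
        intro r hr
        rw [abs_mul, mul_div_assoc]
        exact mul_le_mul_of_nonneg_left (hC r (Finset.mem_Icc.mp hr) m) (abs_nonneg _)
      have h2 : (0:ℝ) ≤ 1 / ((m : ℝ) + 4) ^ 3 := by positivity
      have h3 := abs_add_le (∑ j ∈ Finset.Icc 4 9, a j * DM3 (m + 4) (fun t => (t - x) ^ j) x)
        (DM3 (m + 4) R x)
      linarith [HR m]
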